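/- If β ≠ 0, then in the down-up algebra A(α,β,φ) the elements ud, du, t₁,…,tₙ are algebraically independent over K; i.e., the subalgebra K[ud, du, t₁,…,tₙ] is a polynomial ring in n+2 indeterminates. -/

import Mathlib

open MvPolynomial

namespace DownUp

inductive Gen | u | d

variable {K : Type} [Field K] {n : ℕ}

/-- Free algebra over the polynomial base ring on generators u, d. -/
abbrev F (K : Type) [Field K] (n : ℕ) := FreeAlgebra (MvPolynomial (Fin n) K) Gen

noncomputable def uF : F K n := FreeAlgebra.ι _ Gen.u
noncomputable def dF : F K n := FreeAlgebra.ι _ Gen.d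

/-- The defining relations of the down-up algebra over K[t₁,…,tₙ]. -/
inductive Rel (α β : K) (φ : MvPolynomial (Fin n) K) : F K n → F K n → Prop
  | ddu : Rel α β φ (dF * dF * uF)
      (α • (dF * uF * dF) + β • (uF * dF * dF) + algebraMap _ _ φ * dF)
  | duu : Rel α β φ (dF * uF * uF)
      (α • (uF * dF * uF) + β • (uF * uF * dF) + uF * algebraMap _ _ φ)

/-- The down-up algebra A(α,β,φ) over K[t₁,…,tₙ]. -/
abbrev A (α β : K) (φ : MvPolynomial (Fin n) K) := RingQuot (Rel α β φ)

noncomputable def U (α β : K) (φ : MvPolynomial (Fin n) K) : A α β φ :=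
  RingQuot.mkAlgHom K _ uF
noncomputable def D (α β : K) (φ : MvPolynomial (Fin n) K) : A α β φ :=
  RingQuot.mkAlgHom K _ dF

/-- Image of the base polynomial ring in A. -/
noncomputable def T (α β : K) (φ : MvPolynomial (Fin n) K) :
    MvPolynomial (Fin n) K →ₐ[K] A α β φ :=
  (RingQuot.mkAlgHom K (Rel α β φ)).comp (IsScalarTower.toAlgHom K (MvPolynomial (Fin n) K) (F K n))

end DownUp

/-!
Let `d` act on a commutative ring `B` by an automorphism `σ`, and `u` by `x σ⁻¹`. Then `ud` and
`du` act as multiplication by `x` and by `σ x`, and both down-up relations reduce to the single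
recurrence `σ² x = α σ x + β x + φ`. On `B = K[t₁,…,tₙ][x, y]` such a `σ` with `σ x = y` exists
because `β` is invertible, and it makes `ud`, `du` and the `tᵢ` act as multiplication
by independent variables.
-/

namespace DownUp

section IsDownUpPair

variable {K E : Type*} [CommSemiring K] [Semiring E] [Algebra K E] {α β : K} {c u d : E}

/-- The pair `(u, d)` satisfies the down-up relations with parameters `α`, `β` and `c`, in an
arbitrary `K`-algebra. The element `c` stands for `φ`; as it need not be central, the order of the
factors in `c * d` and `u * c` matters and is that of the presentation of `A(α,β,φ)`. -/
structure IsDownUpPair (α β : K) (c u d : E) : Prop where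
  down_down_up : d * d * u = α • (d * u * d) + β • (u * d * d) + c * d
  down_up_up : d * u * u = α • (u * d * u) + β • (u * u * d) + u * c

theorem IsDownUpPair.commute_mul (h : IsDownUpPair α β c u d) : Commute (u * d) (d * u) :=
  calc u * d * (d * u)
    _ = u * (d * d * u) := by simp only [mul_assoc]
    _ = (α • (u * d * u) + β • (u * u * d) + u * c) * d := by
      rw [h.down_down_up]
      simp only [mul_add, add_mul, mul_smul_comm, smul_mul_assoc, mul_assoc]
    _ = d * u * (u * d) := by rw [← h.down_up_up, mul_assoc]

end IsDownUpPair

section TwistedUp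

variable {K R B : Type*} [CommSemiring K] [CommSemiring R] [CommSemiring B] [Algebra R B]

/-- The operator `x σ⁻¹` on `B`: the action of `u` in the representation in which `d` acts by the
automorphism `σ` and `u * d` acts by multiplication by `x`. -/
def twistedUp (σ : B ≃ₐ[R] B) (x : B) : Module.End R B :=
  Algebra.lmul R B x * σ.symm.toLinearMap

theorem twistedUp_apply (σ : B ≃ₐ[R] B) (x b : B) : twistedUp σ x b = x * σ.symm b := rfl

theorem twistedUp_mul_toLinearMap (σ : B ≃ₐ[R] B) (x : B) :
    twistedUp σ x * σ.toLinearMap = Algebra.lmul R B x := by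
  ext b
  simp [twistedUp_apply]

theorem toLinearMap_mul_twistedUp (σ : B ≃ₐ[R] B) (x : B) :
    σ.toLinearMap * twistedUp σ x = Algebra.lmul R B (σ x) := by
  ext b
  simp [twistedUp_apply]

variable [Algebra K R] [Algebra K B] [IsScalarTower K R B]

theorem isDownUpPair_twistedUp {α β : K} {φ : R} {σ : B ≃ₐ[R] B} {x : B}
    (hσ : σ (σ x) = α • σ x + β • x + algebraMap R B φ) :
    IsDownUpPair α β (algebraMap R (Module.End R B) φ) (twistedUp σ x) σ.toLinearMap where
  down_down_up := by
    ext b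
    simp [twistedUp_apply, hσ, add_mul, Algebra.smul_def φ]
  down_up_up := by
    have hσ_symm : σ x = α • x + β • σ.symm x + algebraMap R B φ := by
      simpa only [map_add, LinearMap.map_smul_of_tower, AlgEquiv.toLinearMap_apply,
        σ.symm_apply_apply, AlgEquiv.commutes] using congrArg σ.symm.toLinearMap hσ
    ext b
    simp only [Module.End.mul_apply, LinearMap.add_apply, LinearMap.smul_apply, twistedUp_apply,
      AlgEquiv.toLinearMap_apply, Module.algebraMap_end_apply, map_mul, map_smul,
      σ.symm_apply_apply, σ.apply_symm_apply]
    rw [hσ_symm]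
    simp only [Algebra.smul_def]
    ring

end TwistedUp

section Lift

variable {K : Type} [Field K] {n : ℕ} {α β : K} {φ : MvPolynomial (Fin n) K}

theorem isDownUpPair_U_D : IsDownUpPair α β (T α β φ φ) (U α β φ) (D α β φ) where
  down_down_up := by
    have h := RingQuot.mkAlgHom_rel K (Rel.ddu (α := α) (β := β) (φ := φ))
    simp only [map_add, map_mul, map_smul] at h
    exact h
  down_up_up := by
    have h := RingQuot.mkAlgHom_rel K (Rel.duu (α := α) (β := β) (φ := φ))
    simp only [map_add, map_mul, map_smul] at h
    exact h

theorem commute_mkAlgHom_T (x : F K n) (f : MvPolynomial (Fin n) K) :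
    Commute (RingQuot.mkAlgHom K (Rel α β φ) x) (T α β φ f) :=
  (Algebra.commute_algebraMap_right f x).map (RingQuot.mkAlgHom K (Rel α β φ))

variable {E : Type*} [Semiring E] [Algebra (MvPolynomial (Fin n) K) E]

/-- The homomorphism from the free algebra on `u` and `d` over `K[t₁,…,tₙ]` sending the generators
to given elements of `E`. -/
noncomputable def freeLift (u d : E) : F K n →ₐ[MvPolynomial (Fin n) K] E :=
  FreeAlgebra.lift _ fun
    | Gen.u => u
    | Gen.d => d

theorem freeLift_uF (u d : E) : freeLift u d (uF : F K n) = u := by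
  simp [freeLift, uF]

theorem freeLift_dF (u d : E) : freeLift u d (dF : F K n) = d := by
  simp [freeLift, dF]

variable [Algebra K E] [IsScalarTower K (MvPolynomial (Fin n) K) E] {u d : E}

theorem IsDownUpPair.freeLift_eq_of_rel (h : IsDownUpPair α β (algebraMap _ E φ) u d)
    ⦃a b : F K n⦄ (hab : Rel α β φ a b) : freeLift u d a = freeLift u d b := by
  cases hab with
  | ddu => simpa [freeLift_uF, freeLift_dF, AlgHom.map_smul_of_tower] using h.down_down_up
  | duu => simpa [freeLift_uF, freeLift_dF, AlgHom.map_smul_of_tower] using h.down_up_up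

/-- The universal property of `A(α,β,φ)`: a pair satisfying the down-up relations in an algebra
over `K[t₁,…,tₙ]` extends to a homomorphism on `A(α,β,φ)`. It is only recorded
as a homomorphism of `K`-algebras; compatibility with `K[t₁,…,tₙ]` is `lift_T`. -/
noncomputable def IsDownUpPair.lift (h : IsDownUpPair α β (algebraMap _ E φ) u d) :
    A α β φ →ₐ[K] E :=
  RingQuot.liftAlgHom K ⟨(freeLift u d).restrictScalars K, h.freeLift_eq_of_rel⟩

namespace IsDownUpPair

variable (h : IsDownUpPair α β (algebraMap _ E φ) u d)

theorem lift_mkAlgHom (x : F K n) :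
    h.lift (RingQuot.mkAlgHom K _ x) = freeLift u d x :=
  RingQuot.liftAlgHom_mkAlgHom_apply K _ _ x

theorem lift_U : h.lift (U α β φ) = u :=
  (h.lift_mkAlgHom uF).trans (freeLift_uF u d)

theorem lift_D : h.lift (D α β φ) = d :=
  (h.lift_mkAlgHom dF).trans (freeLift_dF u d)

theorem lift_T (f : MvPolynomial (Fin n) K) : h.lift (T α β φ f) = algebraMap _ E f :=
  (h.lift_mkAlgHom (algebraMap _ _ f)).trans ((freeLift u d).commutes f)

end IsDownUpPair

end Lift

section RecurrenceShift

variable {K R : Type*} [CommRing K] [CommRing R] [Algebra K R]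

/-- The automorphism of `R[x, y]` sending `x` to `y` and `y` to `α y + β x + c`: the shift of the
generic solution of the recurrence `xₖ₊₂ = α xₖ₊₁ + β xₖ + c`, with `x = X 0` and `y = X 1`
standing for two consecutive terms. -/
noncomputable def recurrenceShift (α : K) (β : Kˣ) (c : R) :
    MvPolynomial (Fin 2) R ≃ₐ[R] MvPolynomial (Fin 2) R :=
  AlgEquiv.ofAlgHom
    (aeval ![X 1, α • X 1 + β • X 0 + C c])
    (aeval ![β⁻¹ • (X 1 - α • X 0 - C c), X 0])
    (by
      ext i : 1
      fin_cases i <;> simp [AlgHom.map_smul_of_tower, add_sub_right_comm])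
    (by
      ext i : 1
      fin_cases i <;> simp [AlgHom.map_smul_of_tower, sub_sub, add_right_comm])

theorem recurrenceShift_X_zero (α : K) (β : Kˣ) (c : R) :
    recurrenceShift α β c (X 0) = X 1 := by
  simp [recurrenceShift]

theorem recurrenceShift_recurrenceShift_X_zero (α : K) (β : Kˣ) (c : R) :
    recurrenceShift α β c (recurrenceShift α β c (X 0)) =
      α • recurrenceShift α β c (X 0) + (β : K) • X 0 + algebraMap R _ c := by
  simp [recurrenceShift, Units.smul_def, algebraMap_eq]

end RecurrenceShift

section LinearIndependence

theorem linearIndependent_X_zero_pow_mul_X_one_pow (R : Type*) [CommSemiring R] :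
    LinearIndependent R
      (fun p : ℕ × ℕ => (X 0 ^ p.1 * X 1 ^ p.2 : MvPolynomial (Fin 2) R)) := by
  let exponent : ℕ × ℕ → (Fin 2 →₀ ℕ) := fun p => Finsupp.single 0 p.1 + Finsupp.single 1 p.2
  have exponent_injective : Function.Injective exponent := fun p q hpq =>
    Prod.ext (by simpa [exponent] using DFunLike.congr_fun hpq 0)
      (by simpa [exponent] using DFunLike.congr_fun hpq 1)
  convert (basisMonomials (Fin 2) R).linearIndependent.comp exponent exponent_injective with p
  simp [exponent, X_pow_eq_monomial, monomial_mul]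

theorem linearIndependent_X_pow_mul_X_pow_mul_algebraMap {K R ι : Type*} [CommSemiring K]
    [CommSemiring R] [Algebra K R] {v : ι → R} (hv : LinearIndependent K v) :
    LinearIndependent K (fun p : ℕ × ℕ × ι =>
      (X 0 ^ p.1 * X 1 ^ p.2.1 * algebraMap R _ (v p.2.2) : MvPolynomial (Fin 2) R)) := by
  let reorder : ℕ × ℕ × ι → ι × ℕ × ℕ := fun p => (p.2.2, p.1, p.2.1)
  have reorder_injective : Function.Injective reorder := by
    rintro ⟨i, j, m⟩ ⟨i', j', m'⟩ h
    simp_all [reorder]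
  convert (linearIndependent_smul hv (linearIndependent_X_zero_pow_mul_X_one_pow R)).comp
    reorder reorder_injective with p
  simp [reorder, Algebra.smul_def, mul_comm]

end LinearIndependence

section Representation

variable {K : Type} [Field K] {n : ℕ} {α β : K} {φ : MvPolynomial (Fin n) K} {B : Type*}
  [CommSemiring B] [Algebra K B] [Algebra (MvPolynomial (Fin n) K) B]
  [IsScalarTower K (MvPolynomial (Fin n) K) B] {σ : B ≃ₐ[MvPolynomial (Fin n) K] B} {x : B}

theorem lift_twistedUp_pow_mul_pow_mul_T (hσ : σ (σ x) = α • σ x + β • x + algebraMap _ B φ)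
    (i j : ℕ) (f : MvPolynomial (Fin n) K) :
    (isDownUpPair_twistedUp hσ).lift
        ((U α β φ * D α β φ) ^ i * (D α β φ * U α β φ) ^ j * T α β φ f) =
      Algebra.lmul _ B (x ^ i * σ x ^ j * algebraMap _ B f) := by
  simp only [map_mul, map_pow, IsDownUpPair.lift_U, IsDownUpPair.lift_D, IsDownUpPair.lift_T,
    twistedUp_mul_toLinearMap, toLinearMap_mul_twistedUp, AlgHom.commutes]

theorem linearIndependent_pow_mul_pow_mul_T {ι : Type*} {v : ι → MvPolynomial (Fin n) K}
    (hσ : σ (σ x) = α • σ x + β • x + algebraMap _ B φ)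
    (hB : LinearIndependent K (fun p : ℕ × ℕ × ι =>
      x ^ p.1 * σ x ^ p.2.1 * algebraMap _ B (v p.2.2))) :
    LinearIndependent K (fun p : ℕ × ℕ × ι =>
      (U α β φ * D α β φ) ^ p.1 * (D α β φ * U α β φ) ^ p.2.1 * T α β φ (v p.2.2)) := by
  let evalOne : Module.End (MvPolynomial (Fin n) K) B →ₗ[K] B :=
    (LinearMap.applyₗ 1).restrictScalars K
  apply LinearIndependent.of_comp (evalOne ∘ₗ (isDownUpPair_twistedUp hσ).lift.toLinearMap)
  simpa [evalOne, Function.comp_def, lift_twistedUp_pow_mul_pow_mul_T hσ] using hB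

end Representation

end DownUp

open DownUp MvPolynomial in
/-- If β ≠ 0, the elements ud, du, t₁,…,tₙ of A(α,β,φ) commute pairwise and are
algebraically independent over K: the monomials `(ud)ⁱ(du)ʲ t^m` are
K-linearly independent, so K[ud,du,t₁,…,tₙ] is a polynomial ring in n+2
indeterminates. -/
theorem downUp_ud_du_polynomial {K : Type} [Field K] {n : ℕ}
    (α β : K) (hβ : β ≠ 0) (φ : MvPolynomial (Fin n) K) :
    Commute (U α β φ * D α β φ) (D α β φ * U α β φ) ∧
    (∀ f : MvPolynomial (Fin n) K,
      Commute (U α β φ * D α β φ) (T α β φ f) ∧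
      Commute (D α β φ * U α β φ) (T α β φ f)) ∧
    LinearIndependent K (fun p : ℕ × ℕ × (Fin n →₀ ℕ) =>
      (U α β φ * D α β φ) ^ p.1 * (D α β φ * U α β φ) ^ p.2.1
        * T α β φ (monomial p.2.2 1)) := by
  refine ⟨isDownUpPair_U_D.commute_mul, fun f => ?_, ?_⟩
  · have hU : Commute (U α β φ) (T α β φ f) := commute_mkAlgHom_T uF f
    have hD : Commute (D α β φ) (T α β φ f) := commute_mkAlgHom_T dF f
    exact ⟨hU.mul_left hD, hD.mul_left hU⟩
  · obtain ⟨β, rfl⟩ := hβ.isUnit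
    have h_monomials : LinearIndependent K fun m : Fin n →₀ ℕ => monomial m (1 : K) := by
      simpa only [coe_basisMonomials] using (basisMonomials (Fin n) K).linearIndependent
    apply linearIndependent_pow_mul_pow_mul_T (v := fun m => monomial m 1)
      (recurrenceShift_recurrenceShift_X_zero α β φ)
    simpa only [recurrenceShift_X_zero] using
      linearIndependent_X_pow_mul_X_pow_mul_algebraMap h_monomials
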